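/- Assume τ > (σ_max + σ_max,2)/2 and δ < τ − σ_max,2, and let r ∈ ℝ^{M+N} satisfy Π̃ r = r. Then for every j ∈ ℕ there exists w ∈ K_j(B̃₁, r) such that ‖B̃₁ w + r‖ ≤ 2 · (1 − 2/(1 + √((τ + σ_max,2 + δ)/(τ − σ_max,2 − δ))))^j · ‖r‖. -/

import Mathlib

open Matrix

noncomputable def vnorm {ι : Type*} [Fintype ι] (x : ι → ℝ) : ℝ :=
  Real.sqrt (∑ i, x i ^ 2)

noncomputable def specNorm {ι κ : Type*} [Fintype ι] [Fintype κ] [DecidableEq κ]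
    (A : Matrix ι κ ℝ) : ℝ :=
  ‖LinearMap.toContinuousLinearMap (Matrix.toEuclideanLin A)‖

noncomputable def Krylov {ι : Type*} [Fintype ι] [DecidableEq ι]
    (B : Matrix ι ι ℝ) (r : ι → ℝ) (j : ℕ) : Submodule ℝ (ι → ℝ) :=
  Submodule.span ℝ {x | ∃ i < j, x = (B ^ i) *ᵥ r}

theorem vnorm_nn {ι : Type*} [Fintype ι] (x : ι → ℝ) : 0 ≤ vnorm x := Real.sqrt_nonneg _

theorem vnorm_sq' {ι : Type*} [Fintype ι] (x : ι → ℝ) : vnorm x ^ 2 = x ⬝ᵥ x := by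
  unfold vnorm
  rw [Real.sq_sqrt (Finset.sum_nonneg fun i _ => sq_nonneg _)]
  simp [dotProduct, sq]

theorem vnorm_cs {ι : Type*} [Fintype ι] (x y : ι → ℝ) : |x ⬝ᵥ y| ≤ vnorm x * vnorm y := by
  apply abs_le_of_sq_le_sq _ (mul_nonneg (vnorm_nn _) (vnorm_nn _))
  rw [mul_pow]
  unfold vnorm
  rw [Real.sq_sqrt (Finset.sum_nonneg fun i _ => sq_nonneg _),
    Real.sq_sqrt (Finset.sum_nonneg fun i _ => sq_nonneg _)]
  exact Finset.sum_mul_sq_le_sq_mul_sq _ _ _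

theorem vnorm_smul' {ι : Type*} [Fintype ι] (c : ℝ) (x : ι → ℝ) :
    vnorm (c • x) = |c| * vnorm x := by
  rw [← abs_of_nonneg (vnorm_nn (c • x)), ← abs_of_nonneg (vnorm_nn x), ← abs_mul,
    ← sq_eq_sq_iff_abs_eq_abs, mul_pow, vnorm_sq', vnorm_sq']
  simp [dotProduct_smul, smul_dotProduct]; ring

theorem symm_dot {ι : Type*} [Fintype ι] (H : Matrix ι ι ℝ) (hH : Hᵀ = H) (x y : ι → ℝ) :
    (H *ᵥ x) ⬝ᵥ y = x ⬝ᵥ (H *ᵥ y) := by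
  rw [dotProduct_mulVec, ← mulVec_transpose, hH]

theorem pell (n : ℤ) : ∃ Q : Polynomial ℝ,
    (Polynomial.Chebyshev.T ℝ n) * (Polynomial.Chebyshev.T ℝ n)
      + Q * Q = 1 + (Polynomial.X * Q) * (Polynomial.X * Q) := by
  refine ⟨Polynomial.Chebyshev.U ℝ (n - 1), ?_⟩
  have h := congrArg (fun p => Polynomial.comp p (2 * Polynomial.X))
    (Polynomial.Chebyshev.S_sq_add_S_sq ℝ (n - 1))
  simp only [Polynomial.sub_comp, Polynomial.add_comp, Polynomial.mul_comp, Polynomial.pow_comp,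
    Polynomial.X_comp, Polynomial.one_comp, Polynomial.Chebyshev.S_comp_two_mul_X,
    sub_add_cancel] at h
  rw [Polynomial.Chebyshev.T_eq_U_sub_X_mul_U]
  linear_combination h

theorem aeval_symm {ι : Type*} [Fintype ι] [DecidableEq ι] (H : Matrix ι ι ℝ) (hH : Hᵀ = H)
    (p : Polynomial ℝ) : (Polynomial.aeval H p)ᵀ = Polynomial.aeval H p := by
  induction p using Polynomial.induction_on' with
  | add p q hp hq => simp [hp, hq]
  | monomial n a =>
    simp [Polynomial.aeval_monomial, Matrix.transpose_mul, Matrix.transpose_pow, hH,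
      Algebra.algebraMap_eq_smul_one]

theorem cheb_contract {ι : Type*} [Fintype ι] [DecidableEq ι] (H : Matrix ι ι ℝ) (hH : Hᵀ = H)
    (hc : ∀ x, vnorm (H *ᵥ x) ≤ vnorm x) (n : ℤ) (x : ι → ℝ) :
    vnorm (Polynomial.aeval H (Polynomial.Chebyshev.T ℝ n) *ᵥ x) ≤ vnorm x := by
  obtain ⟨Q, hQ⟩ := pell n
  set T := Polynomial.Chebyshev.T ℝ n
  have key : ∀ p : Polynomial ℝ, vnorm (Polynomial.aeval H p *ᵥ x) ^ 2
      = x ⬝ᵥ (Polynomial.aeval H (p * p) *ᵥ x) := by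
    intro p
    rw [vnorm_sq', symm_dot _ (aeval_symm H hH p), mulVec_mulVec, map_mul]
  have h := congrArg (fun p => x ⬝ᵥ (Polynomial.aeval H p *ᵥ x)) hQ
  simp only [map_add, add_mulVec, dotProduct_add] at h
  rw [← key, ← key, ← key] at h
  simp only [map_one, one_mulVec, ← vnorm_sq'] at h
  have h2 := hc (Polynomial.aeval H Q *ᵥ x)
  rw [mulVec_mulVec] at h2
  have h3 : Polynomial.aeval H (Polynomial.X * Q) = H * Polynomial.aeval H Q := by simp
  rw [h3] at h
  have h4 := pow_le_pow_left₀ (vnorm_nn _) h2 2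
  exact le_of_sq_le_sq (by linarith) (vnorm_nn _)

theorem krylov_poly {ι : Type*} [Fintype ι] [DecidableEq ι] (B : Matrix ι ι ℝ) (r : ι → ℝ)
    (j : ℕ) (p : Polynomial ℝ) (hp : p.natDegree ≤ j) (h0 : p.eval 0 = 1) :
    ∃ w ∈ Krylov B r j, B *ᵥ w + r = Polynomial.aeval B p *ᵥ r := by
  refine ⟨∑ i ∈ Finset.range j, p.coeff (i+1) • (B ^ i *ᵥ r), ?_, ?_⟩
  · refine Submodule.sum_mem _ fun i hi => Submodule.smul_mem _ _ (Submodule.subset_span ?_)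
    exact ⟨i, Finset.mem_range.1 hi, rfl⟩
  · rw [Polynomial.aeval_eq_sum_range' (n := j+1) (by omega), Finset.sum_range_succ',
      add_mulVec, Matrix.sum_mulVec, Matrix.mulVec_sum]
    rw [← Polynomial.coeff_zero_eq_eval_zero] at h0
    congr 1
    · refine Finset.sum_congr rfl fun i _ => ?_
      rw [mulVec_smul, mulVec_mulVec, ← pow_succ', smul_mulVec]
    · simp [h0]

theorem aeval_congr {ι : Type*} [Fintype ι] [DecidableEq ι] (B D : Matrix ι ι ℝ) (r : ι → ℝ)
    (h : ∀ i : ℕ, B ^ i *ᵥ r = D ^ i *ᵥ r) (p : Polynomial ℝ) :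
    Polynomial.aeval B p *ᵥ r = Polynomial.aeval D p *ᵥ r := by
  rw [Polynomial.aeval_eq_sum_range, Polynomial.aeval_eq_sum_range, Matrix.sum_mulVec,
    Matrix.sum_mulVec]
  refine Finset.sum_congr rfl fun i _ => ?_
  rw [smul_mulVec, smul_mulVec, h]

theorem rate_cosh (τ s : ℝ) (hs : 0 < s) (hsτ : s < τ) (j : ℕ) :
    0 < (Polynomial.Chebyshev.T ℝ j).eval (τ / s) ∧
    1 / (Polynomial.Chebyshev.T ℝ j).eval (τ / s) ≤
      2 * (1 - 2 / (1 + Real.sqrt ((τ + s) / (τ - s)))) ^ j := by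
  set k := Real.sqrt ((τ + s) / (τ - s)) with hk
  have hd : 0 < τ - s := by linarith
  have hk2 : k ^ 2 = (τ + s) / (τ - s) := Real.sq_sqrt (by apply div_nonneg <;> linarith)
  have hk1 : 1 < k := by
    rw [hk, Real.lt_sqrt (by norm_num), lt_div_iff₀ hd]; linarith
  set ρ := 1 - 2 / (1 + k) with hρ
  have hρe : ρ = (k - 1) / (k + 1) := by rw [hρ]; field_simp; ring
  have hρ0 : 0 < ρ := by rw [hρe]; apply div_pos <;> linarith
  have hz : τ / s = Real.cosh (Real.log ρ⁻¹) := by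
    rw [Real.cosh_log (by positivity), inv_inv, hρe]
    have h1 : k - 1 ≠ 0 := by linarith
    have h2 : k + 1 ≠ 0 := by linarith
    rw [eq_div_iff hd.ne'] at hk2
    field_simp
    linear_combination 2 * hk2
  have he : (Polynomial.Chebyshev.T ℝ j).eval (τ / s) = ((ρ^j)⁻¹ + ρ^j) / 2 := by
    rw [hz, Polynomial.Chebyshev.T_real_cosh]
    have : ((j:ℤ):ℝ) * Real.log ρ⁻¹ = Real.log ((ρ^j)⁻¹) := by
      rw [← inv_pow, Real.log_pow]; simp
    rw [this, Real.cosh_log (by positivity), inv_inv]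
  have hq : 0 < ρ ^ j := by positivity
  rw [he]
  refine ⟨by positivity, ?_⟩
  rw [div_le_iff₀ (by positivity)]
  have : ρ ^ j * (ρ^j)⁻¹ = 1 := mul_inv_cancel₀ hq.ne'
  nlinarith [sq_nonneg (ρ^j)]

theorem minres_general {ι : Type*} [Fintype ι] [DecidableEq ι] (C P B1 : Matrix ι ι ℝ)
    (hC : Cᵀ = C) (hPC : P * C = C) (hCP : C * P = C) (τ s : ℝ) (hs : 0 ≤ s) (hsτ : s < τ)
    (hB1 : B1 = C - τ • P) (hCs : ∀ x, vnorm (C *ᵥ x) ≤ s * vnorm x)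
    (r : ι → ℝ) (hr : P *ᵥ r = r) (j : ℕ) :
    ∃ w ∈ Krylov B1 r j, vnorm (B1 *ᵥ w + r) ≤
      2 * (1 - 2 / (1 + Real.sqrt ((τ + s) / (τ - s)))) ^ j * vnorm r := by
  rcases hs.eq_or_lt with hs0 | hs0
  · subst hs0
    have hρ : (1 - 2 / (1 + Real.sqrt ((τ + 0) / (τ - 0)))) = 0 := by
      rw [add_zero, sub_zero, div_self hsτ.ne']; norm_num
    rw [hρ]
    cases j with
    | zero =>
      refine ⟨0, Submodule.zero_mem _, ?_⟩
      simp; linarith [vnorm_nn r]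
    | succ j =>
      refine ⟨τ⁻¹ • r, Submodule.smul_mem _ _ (Submodule.subset_span ⟨0, by omega, by simp⟩), ?_⟩
      have h1 : C *ᵥ r = 0 := by
        have := hCs r
        rw [zero_mul] at this
        have h0 : vnorm (C *ᵥ r) = 0 := le_antisymm this (vnorm_nn _)
        have h2 := vnorm_sq' (C *ᵥ r)
        rw [h0] at h2
        exact dotProduct_self_eq_zero.1 (by rw [← h2]; norm_num)
      have : B1 *ᵥ (τ⁻¹ • r) + r = 0 := by
        rw [mulVec_smul, hB1, sub_mulVec, h1, smul_mulVec, hr, zero_sub, smul_neg, smul_smul,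
          inv_mul_cancel₀ hsτ.ne', one_smul, neg_add_cancel]
      rw [this]; simp [vnorm]
  obtain ⟨hT, hrate⟩ := rate_cosh τ s hs0 hsτ j
  set T := Polynomial.Chebyshev.T ℝ j with hTdef
  set t := T.eval (τ / s) with ht
  set L : Polynomial ℝ := Polynomial.C s⁻¹ * Polynomial.X + Polynomial.C (τ / s) with hL
  set p : Polynomial ℝ := Polynomial.C (1/t) * T.comp L with hp
  have hpdeg : p.natDegree ≤ j := by
    refine (Polynomial.natDegree_C_mul_le _ _).trans ?_
    rw [Polynomial.natDegree_comp, hTdef, Polynomial.Chebyshev.natDegree_T]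
    have : L.natDegree ≤ 1 := Polynomial.natDegree_linear_le
    simpa using Nat.mul_le_mul_left j this
  have hp0 : p.eval 0 = 1 := by
    simp [hp, hL, Polynomial.eval_comp]
    rw [← ht]; exact inv_mul_cancel₀ hT.ne'
  obtain ⟨w, hw, hwe⟩ := krylov_poly B1 r j p hpdeg hp0
  refine ⟨w, hw, ?_⟩
  set D : Matrix ι ι ℝ := C - τ • 1 with hD
  have hDP : D * P = B1 := by rw [hD, hB1, sub_mul, hCP]; simp
  have hPD : P * D = B1 := by rw [hD, hB1, mul_sub, hPC]; simp
  have hcomm : Commute P D := by rw [Commute, SemiconjBy, hDP, hPD]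
  have hpow : ∀ i : ℕ, B1 ^ i *ᵥ r = D ^ i *ᵥ r := by
    intro i
    rw [← hDP, hcomm.symm.mul_pow, ← mulVec_mulVec]
    congr 1
    induction i with
    | zero => simp
    | succ i ih => rw [pow_succ, ← mulVec_mulVec, hr, ih]
  rw [hwe, aeval_congr B1 D r hpow]
  have hLD : Polynomial.aeval D L = s⁻¹ • C := by
    simp [hL, hD, Algebra.algebraMap_eq_smul_one, smul_sub, smul_smul, div_eq_mul_inv]
  have : Polynomial.aeval D p = (1/t) • Polynomial.aeval (s⁻¹ • C) T := by
    rw [hp, map_mul, Polynomial.aeval_comp, hLD, Polynomial.aeval_C,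
      Algebra.algebraMap_eq_smul_one, smul_mul_assoc, one_mul]
  rw [this, smul_mulVec, vnorm_smul', abs_of_pos (by positivity)]
  have hcc := cheb_contract (s⁻¹ • C) (by rw [transpose_smul, hC]) (fun x => by
    rw [smul_mulVec, vnorm_smul', abs_of_pos (by positivity), inv_mul_le_iff₀ hs0]
    exact hCs x) j r
  exact mul_le_mul hrate hcc (vnorm_nn _) (le_trans (by positivity) hrate)

theorem orth_vnorm {n : ℕ} (U : Matrix (Fin n) (Fin n) ℝ) (hU : Uᵀ * U = 1) (a : Fin n → ℝ) :
    vnorm (Uᵀ *ᵥ a) = vnorm a := by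
  have h : U * Uᵀ = 1 := mul_eq_one_comm.1 hU
  rw [← abs_of_nonneg (vnorm_nn (Uᵀ *ᵥ a)), ← abs_of_nonneg (vnorm_nn a),
    ← sq_eq_sq_iff_abs_eq_abs, vnorm_sq', vnorm_sq', dotProduct_mulVec, ← mulVec_transpose,
    mulVec_mulVec, transpose_transpose, h, one_mulVec]

theorem proj_bound {n : ℕ} (u ut a : Fin n → ℝ) (hu : u ⬝ᵥ u = 1) (hut : ut ⬝ᵥ ut = 1)
    (ha : ut ⬝ᵥ a = 0) : |u ⬝ᵥ a| ≤ Real.sqrt (1 - (u ⬝ᵥ ut) ^ 2) * vnorm a := by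
  have h1 : u ⬝ᵥ a = (u - (u ⬝ᵥ ut) • ut) ⬝ᵥ a := by
    rw [sub_dotProduct, smul_dotProduct, ha]; simp
  have h2 : vnorm (u - (u ⬝ᵥ ut) • ut) = Real.sqrt (1 - (u ⬝ᵥ ut) ^ 2) := by
    rw [← Real.sqrt_sq (vnorm_nn _), vnorm_sq']
    congr 1
    simp only [sub_dotProduct, dotProduct_sub, smul_dotProduct, dotProduct_smul, hu, hut,
      smul_eq_mul, dotProduct_comm ut u]
    ring
  rw [h1, ← h2]
  exact vnorm_cs _ _

theorem specNorm_bound {M N : ℕ} (A : Matrix (Fin M) (Fin N) ℝ) (x : Fin N → ℝ) :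
    vnorm (A *ᵥ x) ≤ specNorm A * vnorm x := by
  have h := (LinearMap.toContinuousLinearMap (Matrix.toEuclideanLin A)).le_opNorm
    (WithLp.toLp 2 x)
  simpa [EuclideanSpace.norm_eq, vnorm, specNorm, Matrix.toEuclideanLin] using h

theorem bilin_bound {M N : ℕ} (hN : 0 < N) (hMN : N ≤ M)
    (A : Matrix (Fin M) (Fin N) ℝ)
    (U : Matrix (Fin M) (Fin M) ℝ) (V : Matrix (Fin N) (Fin N) ℝ)
    (hU : Uᵀ * U = 1) (hV : Vᵀ * V = 1)
    (σ : Fin N → ℝ) (hσ : ∀ i, 0 ≤ σ i)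
    (S : Matrix (Fin M) (Fin N) ℝ)
    (hS : ∀ i j, S i j = if (i : ℕ) = (j : ℕ) then σ j else 0)
    (hA : A = U * S * Vᵀ) (m : ℝ) (hm0 : 0 ≤ m) (hm : ∀ i : Fin N, i ≠ ⟨0, hN⟩ → σ i ≤ m)
    (a : Fin M → ℝ) (b : Fin N → ℝ) :
    |a ⬝ᵥ (A *ᵥ b)| ≤ σ ⟨0, hN⟩ * |(Uᵀ *ᵥ a) ⟨0, by omega⟩| * |(Vᵀ *ᵥ b) ⟨0, hN⟩|
      + m * (vnorm a * vnorm b) := by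
  have h1 : a ⬝ᵥ (A *ᵥ b) = ∑ j, σ j * (Uᵀ *ᵥ a) (Fin.castLE hMN j) * (Vᵀ *ᵥ b) j := by
    rw [hA, ← mulVec_mulVec, ← mulVec_mulVec, dotProduct_mulVec, ← mulVec_transpose,
      dotProduct_mulVec]
    simp only [dotProduct]
    refine Finset.sum_congr rfl fun j _ => ?_
    congr 1
    simp only [vecMul, dotProduct, hS]
    rw [Finset.sum_eq_single (Fin.castLE hMN j)]
    · simp [mul_comm]
    · intro i _ hi
      rw [if_neg, mul_zero]
      intro h; apply hi; ext; simpa using h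
    · simp
  have hα := orth_vnorm U hU a
  have hβ := orth_vnorm V hV b
  set α := Uᵀ *ᵥ a
  set β := Vᵀ *ᵥ b
  have h2 : ∑ j, |α (Fin.castLE hMN j)| * |β j| ≤ vnorm a * vnorm b := by
    rw [← hα, ← hβ]
    have h3 := vnorm_cs (fun j => |α (Fin.castLE hMN j)|) (fun j => |β j|)
    refine ((le_abs_self _).trans h3).trans ?_
    have e1 : vnorm (fun j => |β j|) = vnorm β := by simp [vnorm]
    have e2 : vnorm (fun j => |α (Fin.castLE hMN j)|) ≤ vnorm α := by
      simp only [vnorm, sq_abs]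
      apply Real.sqrt_le_sqrt
      have := Finset.sum_map Finset.univ (Fin.castLEEmb hMN) (fun i => α i ^ 2)
      simp only [Fin.castLEEmb_apply] at this
      rw [← this]
      exact Finset.sum_le_sum_of_subset_of_nonneg (Finset.subset_univ _)
        fun i _ _ => sq_nonneg _
    rw [e1]
    exact mul_le_mul_of_nonneg_right e2 (vnorm_nn _)
  rw [h1]
  refine (Finset.abs_sum_le_sum_abs _ _).trans ?_
  have h4 : ∀ j, |σ j * α (Fin.castLE hMN j) * β j| ≤
      (if j = ⟨0, hN⟩ then σ ⟨0, hN⟩ * |α ⟨0, by omega⟩| * |β ⟨0, hN⟩| else 0)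
      + m * (|α (Fin.castLE hMN j)| * |β j|) := by
    intro j
    rw [abs_mul, abs_mul, abs_of_nonneg (hσ j)]
    split_ifs with h
    · subst h
      have : 0 ≤ m * (|α (Fin.castLE hMN ⟨0, hN⟩)| * |β ⟨0, hN⟩|) := by positivity
      simpa using this
    · rw [zero_add, mul_assoc]
      exact mul_le_mul_of_nonneg_right (hm j h) (by positivity)
  refine (Finset.sum_le_sum fun j _ => h4 j).trans ?_
  rw [Finset.sum_add_distrib, ← Finset.mul_sum]
  simp only [Finset.sum_ite_eq', Finset.mem_univ, if_true]
  linarith [mul_le_mul_of_nonneg_left h2 hm0]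

theorem proj_orth {n : ℕ} (u a : Fin n → ℝ) (hu : u ⬝ᵥ u = 1) :
    u ⬝ᵥ ((1 - vecMulVec u u) *ᵥ a) = 0 := by
  rw [sub_mulVec, dotProduct_sub, one_mulVec, vecMulVec_mulVec]
  simp [hu]

theorem proj_idem {n : ℕ} (u : Fin n → ℝ) (hu : u ⬝ᵥ u = 1) :
    (1 - vecMulVec u u) * (1 - vecMulVec u u) = 1 - vecMulVec u u := by
  simp [sub_mul, mul_sub, vecMulVec_mul_vecMulVec, hu]

theorem proj_symm {n : ℕ} (u : Fin n → ℝ) : (1 - vecMulVec u u)ᵀ = 1 - vecMulVec u u := by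
  rw [transpose_sub, transpose_vecMulVec]; simp

theorem proj_contr {n : ℕ} (u a : Fin n → ℝ) (hu : u ⬝ᵥ u = 1) :
    vnorm ((1 - vecMulVec u u) *ᵥ a) ≤ vnorm a := by
  refine le_of_sq_le_sq ?_ (vnorm_nn _)
  rw [vnorm_sq', vnorm_sq', symm_dot _ (proj_symm u), mulVec_mulVec, proj_idem u hu, sub_mulVec,
    dotProduct_sub, one_mulVec, vecMulVec_mulVec]
  simp [dotProduct_comm u a]
  nlinarith [sq_nonneg (a ⬝ᵥ u)]

theorem block_bound {M N : ℕ} (E : Matrix (Fin M) (Fin N) ℝ) (s : ℝ) (hs : 0 ≤ s)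
    (hE : ∀ a b, |a ⬝ᵥ (E *ᵥ b)| ≤ s * (vnorm a * vnorm b)) (x : Fin M ⊕ Fin N → ℝ) :
    vnorm (Matrix.fromBlocks 0 E Eᵀ 0 *ᵥ x) ≤ s * vnorm x := by
  set y := Matrix.fromBlocks 0 E Eᵀ 0 *ᵥ x with hy
  have hsplit : ∀ z : Fin M ⊕ Fin N → ℝ,
      vnorm z ^ 2 = vnorm (z ∘ Sum.inl) ^ 2 + vnorm (z ∘ Sum.inr) ^ 2 := by
    intro z
    rw [vnorm_sq', vnorm_sq', vnorm_sq']
    simp [dotProduct, Fintype.sum_sum_type]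
  have h1 : vnorm y ^ 2 = (y ∘ Sum.inl) ⬝ᵥ (E *ᵥ (x ∘ Sum.inr))
      + (x ∘ Sum.inl) ⬝ᵥ (E *ᵥ (y ∘ Sum.inr)) := by
    have e : y = Sum.elim (E *ᵥ (x ∘ Sum.inr)) (Eᵀ *ᵥ (x ∘ Sum.inl)) := by
      rw [hy, fromBlocks_mulVec]; simp
    rw [vnorm_sq']
    conv_lhs => rw [dotProduct, Fintype.sum_sum_type]
    congr 1
    · simp [dotProduct, e]
    · rw [dotProduct_mulVec, ← mulVec_transpose]
      simp [dotProduct, e]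
  have h2 := (le_abs_self _).trans (hE (y ∘ Sum.inl) (x ∘ Sum.inr))
  have h3 := (le_abs_self _).trans (hE (x ∘ Sum.inl) (y ∘ Sum.inr))
  have hx := hsplit x
  have hyy := hsplit y
  have p1 := vnorm_nn (x ∘ Sum.inl)
  have p2 := vnorm_nn (x ∘ Sum.inr)
  have p3 := vnorm_nn (y ∘ Sum.inl)
  have p4 := vnorm_nn (y ∘ Sum.inr)
  have p5 := vnorm_nn x
  have p6 := vnorm_nn y
  generalize vnorm (x ∘ Sum.inl) = x1 at *
  generalize vnorm (x ∘ Sum.inr) = x2 at *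
  generalize vnorm (y ∘ Sum.inl) = y1 at *
  generalize vnorm (y ∘ Sum.inr) = y2 at *
  have h4 : y1 * x2 + x1 * y2 ≤ vnorm y * vnorm x := by
    apply le_of_sq_le_sq _ (by positivity)
    rw [mul_pow, hx, hyy]
    nlinarith [sq_nonneg (y1 * x1 - x2 * y2)]
  have h5 : vnorm y ^ 2 ≤ s * (vnorm y * vnorm x) := by
    nlinarith [mul_le_mul_of_nonneg_left h4 hs]
  rcases p6.eq_or_lt with h0 | h0
  · rw [← h0]; positivity
  · by_contra hcon
    push Not at hcon
    nlinarith

/-- Theorem 3.5(i). MINRES bound for the JDSVD correction equation with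
approximate singular vectors, in the case `σ₁ = σ_max`. -/
theorem minres_bound_approx_largest {M N : ℕ} (hN : 2 ≤ N) (hMN : N ≤ M)
    (A : Matrix (Fin M) (Fin N) ℝ)
    (U : Matrix (Fin M) (Fin M) ℝ) (V : Matrix (Fin N) (Fin N) ℝ)
    (hU : Uᵀ * U = 1) (hV : Vᵀ * V = 1)
    (σ : Fin N → ℝ) (hσ : ∀ i, 0 ≤ σ i)
    (S : Matrix (Fin M) (Fin N) ℝ)
    (hS : ∀ i j, S i j = if (i : ℕ) = (j : ℕ) then σ j else 0)
    (hA : A = U * S * Vᵀ)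
    (τ : ℝ) (hτ0 : 0 ≤ τ)
    (hclosest : ∀ i : Fin N, i ≠ ⟨0, by omega⟩ → |σ ⟨0, by omega⟩ - τ| < |σ i - τ|)
    (σmax σmax2 : ℝ)
    (hσmax : IsGreatest (Set.range σ) σmax)
    (hσmax2 : IsGreatest (σ '' {i : Fin N | i ≠ ⟨0, by omega⟩}) σmax2)
    (hτ : (σmax + σmax2) / 2 < τ)
    (u1 : Fin M → ℝ) (hu1 : u1 = fun i => U i ⟨0, by omega⟩)
    (v1 : Fin N → ℝ) (hv1 : v1 = fun i => V i ⟨0, by omega⟩)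
    (u1t : Fin M → ℝ) (hu1t : ∑ i, u1t i ^ 2 = 1)
    (v1t : Fin N → ℝ) (hv1t : ∑ i, v1t i ^ 2 = 1)
    (δ : ℝ)
    (hδ : δ = specNorm A *
      (Real.sqrt (1 - (u1 ⬝ᵥ u1t) ^ 2) + Real.sqrt (1 - (v1 ⬝ᵥ v1t) ^ 2)) ^ 2)
    (hδsmall : δ < τ - σmax2)
    (B P B1 : Matrix (Fin M ⊕ Fin N) (Fin M ⊕ Fin N) ℝ)
    (hB : B = Matrix.fromBlocks ((-τ) • 1) A Aᵀ ((-τ) • 1))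
    (hP : P = Matrix.fromBlocks (1 - vecMulVec u1t u1t) 0 0 (1 - vecMulVec v1t v1t))
    (hB1 : B1 = P * B * P)
    (r : Fin M ⊕ Fin N → ℝ) (hr : P *ᵥ r = r) :
    ∀ j : ℕ, ∃ w ∈ Krylov B1 r j,
      vnorm (B1 *ᵥ w + r) ≤
        2 * (1 - 2 / (1 + Real.sqrt ((τ + σmax2 + δ) / (τ - σmax2 - δ)))) ^ j * vnorm r := by
  intro j
  have hN0 : 0 < N := by omega
  have hM0 : 0 < M := by omega
  have hut : u1t ⬝ᵥ u1t = 1 := by rw [← hu1t]; simp [dotProduct, sq]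
  have hvt : v1t ⬝ᵥ v1t = 1 := by rw [← hv1t]; simp [dotProduct, sq]
  have huu : u1 ⬝ᵥ u1 = 1 := by
    have := congrFun (congrFun hU ⟨0, hM0⟩) ⟨0, hM0⟩
    simpa [Matrix.mul_apply, dotProduct, hu1] using this
  have hvv : v1 ⬝ᵥ v1 = 1 := by
    have := congrFun (congrFun hV ⟨0, hN0⟩) ⟨0, hN0⟩
    simpa [Matrix.mul_apply, dotProduct, hv1] using this
  have hm0 : 0 ≤ σmax2 := by
    obtain ⟨i, _, hi⟩ := hσmax2.1
    rw [← hi]; exact hσ i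
  have hm : ∀ i : Fin N, i ≠ ⟨0, hN0⟩ → σ i ≤ σmax2 := fun i hi => hσmax2.2 ⟨i, hi, rfl⟩
  have hUa : ∀ a, (Uᵀ *ᵥ a) ⟨0, hM0⟩ = u1 ⬝ᵥ a := by
    intro a; rw [hu1]; rfl
  have hVb : ∀ b, (Vᵀ *ᵥ b) ⟨0, hN0⟩ = v1 ⬝ᵥ b := by
    intro b; rw [hv1]; rfl
  have hbil := bilin_bound hN0 hMN A U V hU hV σ hσ S hS hA σmax2 hm0 hm
  have hσ1 : σ ⟨0, hN0⟩ ≤ specNorm A := by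
    have hn : vnorm v1 = 1 := by
      have := vnorm_sq' v1
      rw [hvv] at this
      nlinarith [vnorm_nn v1]
    have hnu : vnorm u1 = 1 := by
      have := vnorm_sq' u1
      rw [huu] at this
      nlinarith [vnorm_nn u1]
    have h1 := specNorm_bound A v1
    rw [hn, mul_one] at h1
    have h2 : A *ᵥ v1 = σ ⟨0, hN0⟩ • u1 := by
      have e1 : Vᵀ *ᵥ v1 = Pi.single ⟨0, hN0⟩ 1 := by
        have : v1 = V *ᵥ (Pi.single ⟨0, hN0⟩ 1) := by rw [hv1]; ext i; simp
        rw [this, mulVec_mulVec, hV, one_mulVec]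
      have e2 : u1 = U *ᵥ (Pi.single ⟨0, hM0⟩ 1) := by rw [hu1]; ext i; simp
      rw [hA, ← mulVec_mulVec, ← mulVec_mulVec, e1, e2, ← mulVec_smul]
      congr 1
      ext i
      simp [hS, Pi.single_apply, Fin.ext_iff]
    rw [h2, vnorm_smul', hnu, mul_one, abs_of_nonneg (hσ _)] at h1
    exact h1
  set f := Real.sqrt (1 - (u1 ⬝ᵥ u1t) ^ 2) with hf
  set g := Real.sqrt (1 - (v1 ⬝ᵥ v1t) ^ 2) with hg
  have hf0 : 0 ≤ f := Real.sqrt_nonneg _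
  have hg0 : 0 ≤ g := Real.sqrt_nonneg _
  have hσ0 := hσ ⟨0, hN0⟩
  have hδ0 : 0 ≤ δ := by rw [hδ]; exact mul_nonneg (hσ0.trans hσ1) (sq_nonneg _)
  have hfg : σ ⟨0, hN0⟩ * f * g ≤ δ := by
    rw [hδ, mul_assoc]
    apply mul_le_mul hσ1 _ (by positivity) (hσ0.trans hσ1)
    nlinarith [mul_nonneg hf0 hg0, sq_nonneg f, sq_nonneg g]
  set Pu := 1 - vecMulVec u1t u1t with hPu
  set Pv := 1 - vecMulVec v1t v1t with hPv
  set E := Pu * A * Pv with hE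
  have hEb : ∀ a b, |a ⬝ᵥ (E *ᵥ b)| ≤ (σmax2 + δ) * (vnorm a * vnorm b) := by
    intro a b
    have e : a ⬝ᵥ (E *ᵥ b) = (Pu *ᵥ a) ⬝ᵥ (A *ᵥ (Pv *ᵥ b)) := by
      rw [symm_dot _ (proj_symm u1t), mulVec_mulVec, mulVec_mulVec]
    rw [e]
    have h1 := hbil (Pu *ᵥ a) (Pv *ᵥ b)
    rw [hUa, hVb] at h1
    have h2 := proj_bound u1 u1t (Pu *ᵥ a) huu hut (proj_orth u1t a hut)
    have h3 := proj_bound v1 v1t (Pv *ᵥ b) hvv hvt (proj_orth v1t b hvt)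
    rw [← hf] at h2
    rw [← hg] at h3
    have h4 := proj_contr u1t a hut
    have h5 := proj_contr v1t b hvt
    rw [← hPu] at h4
    rw [← hPv] at h5
    have h6 : vnorm (Pu *ᵥ a) * vnorm (Pv *ᵥ b) ≤ vnorm a * vnorm b :=
      mul_le_mul h4 h5 (vnorm_nn _) (vnorm_nn _)
    have h60 := mul_nonneg (vnorm_nn (Pu *ᵥ a)) (vnorm_nn (Pv *ᵥ b))
    have h7 := mul_le_mul h2 h3 (abs_nonneg _) (mul_nonneg hf0 (vnorm_nn _))
    have h8 := mul_le_mul_of_nonneg_left h7 hσ0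
    have h9 := mul_le_mul_of_nonneg_right hfg h60
    have h10 := mul_le_mul_of_nonneg_left h6 (add_nonneg hm0 hδ0)
    nlinarith
  have i1 : Pu * Pu = Pu := proj_idem u1t hut
  have i2 : Pv * Pv = Pv := proj_idem v1t hvt
  have t1 : Puᵀ = Pu := proj_symm u1t
  have t2 : Pvᵀ = Pv := proj_symm v1t
  have e3 : Eᵀ = Pv * Aᵀ * Pu := by
    rw [hE, transpose_mul, transpose_mul, t1, t2, Matrix.mul_assoc]
  have key := minres_general (Matrix.fromBlocks 0 E Eᵀ 0) P B1
    (by rw [fromBlocks_transpose]; simp)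
    (by
      have e1 : Pu * E = E := by
        rw [hE, ← Matrix.mul_assoc, ← Matrix.mul_assoc, i1]
      have e2 : Pv * Eᵀ = Eᵀ := by
        rw [e3, ← Matrix.mul_assoc, ← Matrix.mul_assoc, i2]
      rw [hP, fromBlocks_multiply, e1, e2]; simp)
    (by
      have e1 : E * Pv = E := by
        rw [hE, Matrix.mul_assoc, i2]
      have e2 : Eᵀ * Pu = Eᵀ := by
        rw [e3, Matrix.mul_assoc, i1]
      rw [hP, fromBlocks_multiply, e1, e2]; simp)
    τ (σmax2 + δ) (add_nonneg hm0 hδ0) (by linarith)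
    (by
      rw [hB1, hB, hP, fromBlocks_multiply, fromBlocks_multiply, e3, fromBlocks_smul, hE,
        sub_eq_add_neg, fromBlocks_neg, fromBlocks_add]
      simp [i1, i2])
    (block_bound E _ (add_nonneg hm0 hδ0) hEb) r hr j
  rw [← add_assoc, ← sub_sub] at key
  exact key
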